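/- For every integer t ≥ 4, the identity w_3·w_4^{2^{t-1}-2} = g_{2^{t+1}-5} + w_2^{2^{t-1}}·g_{2^t-5} + w_3^{2^{t-1}}·g_{2^{t-1}-5} holds in the polynomial ring F_2[w_2,w_3,w_4]. -/

import Mathlib

open MvPolynomial

/-- The polynomials `g_r = g_r^{(4)}` in `F_2[w_2,w_3,w_4]` (variables `X 0 = w_2`,
`X 1 = w_3`, `X 2 = w_4`): `g_0 = 1`, `g_r = 0` for `r < 0`, and
`g_r = w_2·g_{r-2} + w_3·g_{r-3} + w_4·g_{r-4}` for `r ≥ 1`. -/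
noncomputable def g4 : ℤ → MvPolynomial (Fin 3) (ZMod 2)
  | r =>
    if r ≤ 0 then (if r = 0 then 1 else 0)
    else X 0 * g4 (r - 2) + X 1 * g4 (r - 3) + X 2 * g4 (r - 4)
  termination_by r => r.toNat
  decreasing_by all_goals omega

/-- The ideal `I_{n,4} = (g_{n-3}, g_{n-2}, g_{n-1}, g_n)` of `F_2[w_2,w_3,w_4]`. -/
noncomputable def I4 (n : ℤ) : Ideal (MvPolynomial (Fin 3) (ZMod 2)) :=
  Ideal.span {g4 (n - 3), g4 (n - 2), g4 (n - 1), g4 n}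

/-!
Put `P(x) = 1 + w₂x² + w₃x³ + w₄x⁴`. In characteristic two the recurrence says that
`G(x) = ∑ gₙxⁿ` is the inverse of `P`. Hence `P^q · G = P^(q-1)` for `q = 2^s`, where
`P^q = 1 + w₂^q x^(2q) + w₃^q x^(3q) + w₄^q x^(4q)` by Frobenius. In degree `4q - 5`, one below the
top degree of `P^(q-1)`, the right-hand side is `(q - 1) w₃ w₄^(q-2) = w₃ w₄^(q-2)` for even `q`,
while on the left the `w₄^q` term drops out because `g₋₅ = 0`.
-/

section PenultimateCoeff

open scoped Polynomial

theorem coeff_mul_penultimate {R : Type*} [Semiring R] {p q : R[X]} {d e : ℕ}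
    (hp : p.natDegree ≤ d + 1) (hq : q.natDegree ≤ e + 1) :
    (p * q).coeff (d + e + 1) = p.coeff d * q.coeff (e + 1) + p.coeff (d + 1) * q.coeff e := by
  rw [Polynomial.coeff_mul]
  refine Finset.sum_eq_add_of_mem (d, e + 1) (d + 1, e) ?_ ?_ (by simp) ?_
  · simp only [Finset.HasAntidiagonal.mem_antidiagonal]; omega
  · simp only [Finset.HasAntidiagonal.mem_antidiagonal]; omega
  · rintro ⟨i, j⟩ hij ⟨hleft, hright⟩
    simp only [Finset.HasAntidiagonal.mem_antidiagonal, ne_eq, Prod.mk.injEq] at hij hleft hright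
    obtain hi | hj : d + 1 < i ∨ e + 1 < j := by omega
    · rw [Polynomial.coeff_eq_zero_of_natDegree_lt (hp.trans_lt hi), zero_mul]
    · rw [Polynomial.coeff_eq_zero_of_natDegree_lt (hq.trans_lt hj), mul_zero]

theorem coeff_pow_penultimate {R : Type*} [CommSemiring R] {p : R[X]} {d : ℕ}
    (hp : p.natDegree ≤ d + 1) (m : ℕ) :
    (p ^ (m + 1)).coeff ((d + 1) * m + d) = (m + 1) * p.coeff d * p.coeff (d + 1) ^ m := by
  induction m with
  | zero => simp
  | succ m ih =>
    have hdeg : (p ^ (m + 1)).natDegree ≤ (d + 1) * m + d + 1 :=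
      (Polynomial.natDegree_pow_le_of_le (m + 1) hp).trans_eq (by ring)
    have htop : (p ^ (m + 1)).coeff ((d + 1) * m + d + 1) = p.coeff (d + 1) ^ (m + 1) := by
      rw [← Polynomial.coeff_pow_of_natDegree_le hp]
      congr 1
      ring
    rw [pow_succ, show (d + 1) * (m + 1) + d = (d + 1) * m + d + d + 1 by ring,
      coeff_mul_penultimate hdeg hp, ih, htop]
    push_cast
    ring

end PenultimateCoeff

section TotalClass

open scoped Polynomial

variable {R : Type*}

/-- The polynomial `1 + a x² + b x³ + c x⁴`. For `a, b, c = w₂, w₃, w₄` it is the total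
Stiefel–Whitney class of an oriented rank-four bundle, graded by the powers of `x`. -/
noncomputable def totalClass [Semiring R] (a b c : R) : R[X] :=
  1 + Polynomial.C a * Polynomial.X ^ 2 + Polynomial.C b * Polynomial.X ^ 3
    + Polynomial.C c * Polynomial.X ^ 4

theorem natDegree_totalClass_le [Semiring R] (a b c : R) :
    (totalClass a b c).natDegree ≤ 4 := by
  unfold totalClass
  compute_degree

theorem coeff_three_totalClass [Semiring R] (a b c : R) :
    (totalClass a b c).coeff 3 = b := by
  simp [totalClass, Polynomial.coeff_one, Polynomial.coeff_X_pow]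

theorem coeff_four_totalClass [Semiring R] (a b c : R) :
    (totalClass a b c).coeff 4 = c := by
  simp [totalClass, Polynomial.coeff_one, Polynomial.coeff_X_pow]

theorem totalClass_pow_char_pow [CommSemiring R] (p : ℕ) [Fact p.Prime] [CharP R p]
    (a b c : R) (s : ℕ) :
    totalClass a b c ^ p ^ s =
      1 + Polynomial.C (a ^ p ^ s) * Polynomial.X ^ (2 * p ^ s)
        + Polynomial.C (b ^ p ^ s) * Polynomial.X ^ (3 * p ^ s)
        + Polynomial.C (c ^ p ^ s) * Polynomial.X ^ (4 * p ^ s) := by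
  simp only [totalClass, add_pow_char_pow, one_pow, mul_pow, ← pow_mul, Polynomial.C_pow]

theorem coeff_totalClass_pow_succ_of_even [CommSemiring R] [CharP R 2] (a b c : R) {m : ℕ}
    (hm : Even m) :
    (totalClass a b c ^ (m + 1)).coeff (4 * m + 3) = b * c ^ m := by
  rw [coeff_pow_penultimate (natDegree_totalClass_le a b c), coeff_three_totalClass,
    coeff_four_totalClass, CharTwo.natCast_eq_ite, if_pos hm, zero_add, one_mul]

end TotalClass

theorem g4_of_neg {r : ℤ} (hr : r < 0) : g4 r = 0 := by
  rw [g4, if_pos hr.le, if_neg hr.ne]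

theorem g4_zero : g4 0 = 1 := by
  rw [g4, if_pos le_rfl, if_pos rfl]

theorem g4_of_pos {r : ℤ} (hr : 0 < r) :
    g4 r = X 0 * g4 (r - 2) + X 1 * g4 (r - 3) + X 2 * g4 (r - 4) := by
  rw [g4, if_neg hr.not_ge]

/-- The generating series `G(x) = ∑ gₙ xⁿ` over `n ≥ 0`. -/
noncomputable def g4Series : PowerSeries (MvPolynomial (Fin 3) (ZMod 2)) :=
  PowerSeries.mk fun n => g4 n

theorem coeff_g4Series (n : ℕ) : PowerSeries.coeff n g4Series = g4 n :=
  PowerSeries.coeff_mk _ _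

theorem coeff_C_mul_X_pow_mul_g4Series (a : MvPolynomial (Fin 3) (ZMod 2)) (k n : ℕ) :
    PowerSeries.coeff n (PowerSeries.C a * PowerSeries.X ^ k * g4Series) = a * g4 (n - k) := by
  rw [mul_assoc, PowerSeries.coeff_C_mul, PowerSeries.coeff_X_pow_mul']
  split_ifs with hkn
  · rw [coeff_g4Series, Nat.cast_sub hkn]
  · rw [g4_of_neg (by omega)]

theorem coeff_lacunary_mul_g4Series (a b c : MvPolynomial (Fin 3) (ZMod 2)) (i j k n : ℕ) :
    PowerSeries.coeff n
        ((1 + Polynomial.C a * Polynomial.X ^ i + Polynomial.C b * Polynomial.X ^ j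
          + Polynomial.C c * Polynomial.X ^ k).toPowerSeries * g4Series) =
      g4 n + a * g4 (n - i) + b * g4 (n - j) + c * g4 (n - k) := by
  simp only [Polynomial.coe_add, Polynomial.coe_mul, Polynomial.coe_pow, Polynomial.coe_C,
    Polynomial.coe_X, Polynomial.coe_one, add_mul, one_mul, map_add,
    coeff_C_mul_X_pow_mul_g4Series, coeff_g4Series]

theorem totalClass_mul_g4Series :
    (totalClass (X 0) (X 1) (X 2 : MvPolynomial (Fin 3) (ZMod 2))).toPowerSeries * g4Series
      = 1 := by
  ext1 n
  rw [totalClass, coeff_lacunary_mul_g4Series, PowerSeries.coeff_one]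
  split_ifs with hn
  · simp [hn, g4_of_neg, g4_zero]
  · rw [add_assoc, add_assoc, ← add_assoc (X 0 * _)]
    push_cast
    rw [← g4_of_pos (by omega), CharTwo.add_self_eq_zero]

theorem coeff_totalClass_pow_two_pow_sub_one (s n : ℕ) :
    (totalClass (X 0) (X 1) (X 2 : MvPolynomial (Fin 3) (ZMod 2)) ^ (2 ^ s - 1)).coeff n =
      g4 n + X 0 ^ 2 ^ s * g4 (n - 2 * 2 ^ s) + X 1 ^ 2 ^ s * g4 (n - 3 * 2 ^ s)
        + X 2 ^ 2 ^ s * g4 (n - 4 * 2 ^ s) := by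
  set P := totalClass (X 0) (X 1) (X 2 : MvPolynomial (Fin 3) (ZMod 2)) with hP
  have hpow : (P ^ (2 ^ s - 1)).toPowerSeries = (P ^ 2 ^ s).toPowerSeries * g4Series := by
    rw [← pow_sub_one_mul (Nat.two_pow_pos s).ne' P, Polynomial.coe_mul, mul_assoc,
      totalClass_mul_g4Series, mul_one]
  rw [← Polynomial.coeff_coe, hpow, hP, totalClass_pow_char_pow 2, coeff_lacunary_mul_g4Series]
  simp only [Nat.cast_mul, Nat.cast_pow, Nat.cast_ofNat]

theorem stmt10_general (t : ℕ) (ht : 2 ≤ t) :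
    (X 1 : MvPolynomial (Fin 3) (ZMod 2)) * X 2 ^ (2 ^ (t - 1) - 2) =
      g4 (2 ^ (t + 1) - 5) + X 0 ^ 2 ^ (t - 1) * g4 (2 ^ t - 5)
        + X 1 ^ 2 ^ (t - 1) * g4 (2 ^ (t - 1) - 5) := by
  obtain ⟨s, rfl⟩ : ∃ s, t = s + 1 := ⟨t - 1, by omega⟩
  have heven : Even (2 ^ s) := even_two.pow_of_ne_zero (by omega)
  obtain ⟨m, hm⟩ : ∃ m, 2 ^ s = m + 2 :=
    Nat.exists_eq_add_of_le' (Nat.le_of_dvd (Nat.two_pow_pos s) heven.two_dvd)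
  have hm_even : Even m := by simpa [hm, Nat.even_add] using heven
  have hm_int : (2 : ℤ) ^ s = m + 2 := mod_cast hm
  have hcoeff := coeff_totalClass_pow_two_pow_sub_one s (4 * m + 3)
  rw [show 2 ^ s - 1 = m + 1 by omega, coeff_totalClass_pow_succ_of_even _ _ _ hm_even,
    g4_of_neg (r := _ - 4 * 2 ^ s) (by push_cast; omega), mul_zero, add_zero] at hcoeff
  rw [Nat.add_sub_cancel, show 2 ^ s - 2 = m by omega, hcoeff]
  have hfirst : (2 : ℤ) ^ (s + 1 + 1) - 5 = (4 * m + 3 : ℕ) := by push_cast; lia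
  have hsecond : (2 : ℤ) ^ (s + 1) - 5 = (4 * m + 3 : ℕ) - 2 * 2 ^ s := by push_cast; lia
  have hthird : (2 : ℤ) ^ s - 5 = (4 * m + 3 : ℕ) - 3 * 2 ^ s := by push_cast; lia
  rw [hfirst, hsecond, hthird]

/-- Equation (3.6): for every `t ≥ 4`,
`w_3 w_4^{2^{t-1}-2} = g_{2^{t+1}-5} + w_2^{2^{t-1}} g_{2^t-5} + w_3^{2^{t-1}} g_{2^{t-1}-5}`
in `F_2[w_2,w_3,w_4]`. -/
theorem stmt10 (t : ℕ) (ht : 4 ≤ t) :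
    (X 1 : MvPolynomial (Fin 3) (ZMod 2)) * X 2 ^ (2 ^ (t - 1) - 2) =
      g4 (2 ^ (t + 1) - 5) + X 0 ^ 2 ^ (t - 1) * g4 (2 ^ t - 5)
        + X 1 ^ 2 ^ (t - 1) * g4 (2 ^ (t - 1) - 5) :=
  stmt10_general t (by omega)
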